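/- arXiv:2407.08587 — 9 statements merged into one kernel-verified Lean document; each statement's English description precedes it below -/
import Mathlib

section
/- Consider the finite state space S = {0,1,…,b_max} × {0,1,…,Δ_max} × {0,1} of the QVAoI status-update MDP, with b_max ≥ 1 and Δ_max ≥ 1, and parameters β, q, p_t ∈ (0,1) and p_s ∈ (0,1]. Then for any two states s = (b,Δ,r) and s′ = (b′,Δ′,r′) in S, there exist n ≥ 1, a sequence of actions a_0,…,a_{n−1} ∈ {0,1}, and a sequence of states s_0 = s, s_1, …, s_n = s′ in S such that P(s_{i+1} | s_i, a_i) > 0 for every i = 0,…,n−1. (Consequently the MDP is weakly accessible, with an empty set of transient states.) -/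
/-!
STATEMENT 0: The QVAoI status-update MDP is weakly accessible: any state `s'` in the
finite state space `S = {0,…,b_max} × {0,…,Δ_max} × {0,1}` can be reached from any
state `s` in `S` by a finite sequence of actions, each step having positive one-step
transition probability.
-/

/-- Realized action: `d = a` if the battery is nonempty and there is a query, else `0`. -/
def realizedAction (s : ℕ × ℕ × ℕ) (a : ℕ) : ℕ :=
  if s.1 ≠ 0 ∧ s.2.2 = 1 then a else 0

/-- Deterministic next state given the realizations `e` (energy arrival), `c` (channel
success), `z` (version generation) and `r'` (next query indicator). -/
def nextState (bmax Δmax : ℕ) (s : ℕ × ℕ × ℕ) (a e c z r' : ℕ) : ℕ × ℕ × ℕ :=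
  let d := realizedAction s a
  (min (s.1 + e - d) bmax,
   if d = 1 ∧ c = 1 then z else min (s.2.1 + z) Δmax,
   r')

/-- One-step transition probability `P(s' | s, a)` of the QVAoI MDP, obtained by summing
over the independent Bernoulli realizations `e ~ Ber(β)`, `c ~ Ber(p_s)`, `z ~ Ber(p_t)`
and `r' ~ Ber(q)`. -/
def transProb (β ps pt q : ℝ) (bmax Δmax : ℕ) (s : ℕ × ℕ × ℕ) (a : ℕ)
    (s' : ℕ × ℕ × ℕ) : ℝ :=
  ∑ e ∈ Finset.range 2, ∑ c ∈ Finset.range 2, ∑ z ∈ Finset.range 2, ∑ r' ∈ Finset.range 2,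
    (if e = 1 then β else 1 - β) * (if c = 1 then ps else 1 - ps) *
    (if z = 1 then pt else 1 - pt) * (if r' = 1 then q else 1 - q) *
    (if s' = nextState bmax Δmax s a e c z r' then 1 else 0)

/-- Membership in the finite state space `S`. -/
def inStateSpace (bmax Δmax : ℕ) (s : ℕ × ℕ × ℕ) : Prop :=
  s.1 ≤ bmax ∧ s.2.1 ≤ Δmax ∧ s.2.2 ≤ 1

/-- One step of positive probability between two states of the state space. -/
def PosStep (β ps pt q : ℝ) (bmax Δmax : ℕ) (x y : ℕ × ℕ × ℕ) : Prop :=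
  inStateSpace bmax Δmax x ∧ inStateSpace bmax Δmax y ∧
    ∃ a ≤ 1, 0 < transProb β ps pt q bmax Δmax x a y

theorem transProb_pos {β ps pt q : ℝ} (bmax Δmax : ℕ)
    (hβ : 0 < β ∧ β < 1) (hq : 0 < q ∧ q < 1) (hpt : 0 < pt ∧ pt < 1)
    (hps : 0 < ps ∧ ps ≤ 1) (s s' : ℕ × ℕ × ℕ) (a e z r : ℕ)
    (he : e ≤ 1) (hz : z ≤ 1) (hr : r ≤ 1)
    (h : s' = nextState bmax Δmax s a e 1 z r) :
    0 < transProb β ps pt q bmax Δmax s a s' := by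
  have b1 : ∀ e : ℕ, 0 < (if e = 1 then β else 1 - β) := fun e => by split_ifs <;> linarith
  have b2 : ∀ e : ℕ, 0 < (if e = 1 then q else 1 - q) := fun e => by split_ifs <;> linarith
  have b3 : ∀ e : ℕ, 0 < (if e = 1 then pt else 1 - pt) := fun e => by split_ifs <;> linarith
  have b4 : ∀ e : ℕ, 0 ≤ (if e = 1 then ps else 1 - ps) := fun e => by split_ifs <;> linarith
  have b5 : ∀ (P : Prop) [Decidable P], (0 : ℝ) ≤ (if P then 1 else 0) :=
    fun P _ => by split_ifs <;> norm_num
  have nn : ∀ e c z r : ℕ, 0 ≤ (if e = 1 then β else 1 - β) * (if c = 1 then ps else 1 - ps) *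
      (if z = 1 then pt else 1 - pt) * (if r = 1 then q else 1 - q) *
      (if s' = nextState bmax Δmax s a e c z r then (1 : ℝ) else 0) := fun e c z r =>
    mul_nonneg (mul_nonneg (mul_nonneg (mul_nonneg (b1 e).le (b4 c)) (b3 z).le) (b2 r).le) (b5 _)
  unfold transProb
  refine Finset.sum_pos' (fun e _ => Finset.sum_nonneg fun c _ => Finset.sum_nonneg fun z _ =>
    Finset.sum_nonneg fun r _ => nn e c z r) ⟨e, Finset.mem_range.2 (by omega), ?_⟩
  refine Finset.sum_pos' (fun c _ => Finset.sum_nonneg fun z _ =>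
    Finset.sum_nonneg fun r _ => nn e c z r) ⟨1, Finset.mem_range.2 (by omega), ?_⟩
  refine Finset.sum_pos' (fun z _ =>
    Finset.sum_nonneg fun r _ => nn e 1 z r) ⟨z, Finset.mem_range.2 (by omega), ?_⟩
  refine Finset.sum_pos' (fun r _ => nn e 1 z r) ⟨r, Finset.mem_range.2 (by omega), ?_⟩
  rw [if_pos h, if_pos (rfl : (1 : ℕ) = 1), mul_one]
  exact mul_pos (mul_pos (mul_pos (b1 e) hps.1) (b3 z)) (b2 r)

theorem path_of_transGen {β ps pt q : ℝ} {bmax Δmax : ℕ} {s s' : ℕ × ℕ × ℕ}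
    (h : Relation.TransGen (PosStep β ps pt q bmax Δmax) s s') :
    ∃ n : ℕ, 1 ≤ n ∧ ∃ a : ℕ → ℕ, ∃ path : ℕ → ℕ × ℕ × ℕ,
      path 0 = s ∧ path n = s' ∧
      (∀ i ≤ n, inStateSpace bmax Δmax (path i)) ∧
      (∀ i < n, a i ≤ 1 ∧
        0 < transProb β ps pt q bmax Δmax (path i) (a i) (path (i + 1))) := by
  induction h using Relation.TransGen.head_induction_on with
  | @single x hx =>
    obtain ⟨h1, h2, a, ha, hp⟩ := hx
    refine ⟨1, le_rfl, fun _ => a, fun i => if i = 0 then x else s', by simp, by simp, ?_, ?_⟩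
    · intro i _
      dsimp only
      split_ifs <;> assumption
    · intro i hi
      obtain rfl : i = 0 := by omega
      exact ⟨ha, by simpa using hp⟩
  | @head x y hx _ ih =>
    obtain ⟨h1, h2, a, ha, hp⟩ := hx
    obtain ⟨n, hn, f, path, p0, pn, hS, hP⟩ := ih
    refine ⟨n + 1, by omega, fun i => Nat.casesOn i a f, fun i => Nat.casesOn i x path,
      rfl, pn, ?_, ?_⟩
    · rintro (_ | i) hi
      · exact h1
      · exact hS i (by omega)
    · rintro (_ | i) hi
      · refine ⟨ha, ?_⟩
        subst p0
        exact hp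
      · exact hP i (by omega)

theorem qvaoi_mdp_weakly_accessible
    (bmax Δmax : ℕ) (hbmax : 1 ≤ bmax) (hΔmax : 1 ≤ Δmax)
    (β q pt ps : ℝ)
    (hβ : 0 < β ∧ β < 1) (hq : 0 < q ∧ q < 1) (hpt : 0 < pt ∧ pt < 1)
    (hps : 0 < ps ∧ ps ≤ 1)
    (s s' : ℕ × ℕ × ℕ)
    (hs : inStateSpace bmax Δmax s) (hs' : inStateSpace bmax Δmax s') :
    ∃ n : ℕ, 1 ≤ n ∧ ∃ a : ℕ → ℕ, ∃ path : ℕ → ℕ × ℕ × ℕ,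
      path 0 = s ∧ path n = s' ∧
      (∀ i ≤ n, inStateSpace bmax Δmax (path i)) ∧
      (∀ i < n, a i ≤ 1 ∧
        0 < transProb β ps pt q bmax Δmax (path i) (a i) (path (i + 1))) := by
  have step : ∀ x y : ℕ × ℕ × ℕ, inStateSpace bmax Δmax x → inStateSpace bmax Δmax y →
      ∀ a e z r : ℕ, a ≤ 1 → e ≤ 1 → z ≤ 1 → r ≤ 1 → y = nextState bmax Δmax x a e 1 z r →
      PosStep β ps pt q bmax Δmax x y := fun x y hx hy a e z r ha he hz hr h =>
    ⟨hx, hy, a, ha, transProb_pos bmax Δmax hβ hq hpt hps x y a e z r he hz hr h⟩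
  apply path_of_transGen
  obtain ⟨b, D, r⟩ := s
  obtain ⟨b', D', r'⟩ := s'
  obtain ⟨hb, hD, hr⟩ := hs
  obtain ⟨hb', hD', hr'⟩ := hs'
  dsimp only at hb hD hr hb' hD' hr'
  -- drain the battery
  have drain : ∀ k ≤ bmax, Relation.ReflTransGen (PosStep β ps pt q bmax Δmax)
      (k, 0, 1) (0, 0, 1) := by
    intro k
    induction k with
    | zero => intro _; exact .refl
    | succ k ih =>
      intro hk
      refine .head (step _ (k, 0, 1) ⟨hk, by simp, le_rfl⟩ ⟨by simp; omega, by simp, le_rfl⟩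
        1 0 0 1 le_rfl (by simp) (by simp) le_rfl ?_) (ih (by omega))
      simp [nextState, realizedAction]; omega
  -- charge the battery
  have charge : ∀ k ≤ bmax, Relation.ReflTransGen (PosStep β ps pt q bmax Δmax)
      (0, 0, 1) (k, 0, 1) := by
    intro k
    induction k with
    | zero => intro _; exact .refl
    | succ k ih =>
      intro hk
      refine .tail (ih (by omega)) (step (k, 0, 1) _ ⟨by simp; omega, by simp, le_rfl⟩
        ⟨hk, by simp, le_rfl⟩ 0 1 0 1 (by simp) le_rfl (by simp) le_rfl ?_)
      simp [nextState, realizedAction]; omega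
  -- let the version age grow
  have age : ∀ k ≤ Δmax, Relation.ReflTransGen (PosStep β ps pt q bmax Δmax)
      (b', 0, 1) (b', k, 1) := by
    intro k
    induction k with
    | zero => intro _; exact .refl
    | succ k ih =>
      intro hk
      refine .tail (ih (by omega)) (step (b', k, 1) _ ⟨hb', by simp; omega, le_rfl⟩
        ⟨hb', hk, le_rfl⟩ 0 0 1 1 (by simp) (by simp) le_rfl le_rfl ?_)
      simp [nextState, realizedAction]; omega
  have first : PosStep β ps pt q bmax Δmax (b, D, r) (min (b + 1) bmax, D, 1) := by
    refine step _ _ ⟨hb, hD, hr⟩ ⟨by simp, hD, le_rfl⟩ 0 1 0 1 (by simp) le_rfl (by simp) le_rfl ?_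
    simp [nextState, realizedAction]; omega
  have second : PosStep β ps pt q bmax Δmax (min (b + 1) bmax, D, 1)
      (min (b + 1) bmax - 1, 0, 1) := by
    refine step _ _ ⟨by simp, hD, le_rfl⟩ ⟨by simp, by simp, le_rfl⟩ 1 0 0 1
      le_rfl (by simp) (by simp) le_rfl ?_
    have h0 : min (b + 1) bmax ≠ 0 := by omega
    simp only [nextState, realizedAction]
    rw [if_pos ⟨h0, trivial⟩]
    simp only [Prod.mk.injEq]
    refine ⟨by omega, by simp, trivial⟩
  have last : PosStep β ps pt q bmax Δmax (b', D', 1) (b', D', r') := by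
    refine step _ _ ⟨hb', hD', le_rfl⟩ ⟨hb', hD', hr'⟩ 0 0 0 r' (by simp) (by simp) (by simp) hr' ?_
    simp [nextState, realizedAction]; omega
  have mid := ((drain (min (b + 1) bmax - 1) (by omega)).trans (charge b' hb')).trans (age D' hD')
  exact Relation.TransGen.head' first ((Relation.ReflTransGen.head second mid).tail last)
end

section
/- Let (V_k)_{k∈ℕ} be the value-iteration sequence of the QVAoI status-update MDP with V_0 ≡ 0. Then for every k ∈ ℕ, every battery level b with 1 ≤ b ≤ b_max, every r ∈ {0,1}, and all Δ⁻, Δ⁺ with 0 ≤ Δ⁻ ≤ Δ⁺ ≤ Δ_max, one has (1 − p_s)·[V_k(b−1, Δ⁺, r) − V_k(b−1, Δ⁻, r)] − [V_k(b, Δ⁺, r) − V_k(b, Δ⁻, r)] ≤ 0. -/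
/-!
STATEMENT 1: For the value-iteration sequence (V_k) of the QVAoI status-update MDP with
V_0 ≡ 0, for every k, every 1 ≤ b ≤ b_max, every r ∈ {0,1}, and all 0 ≤ Δ⁻ ≤ Δ⁺ ≤ Δ_max:
(1 − p_s)·[V_k(b−1,Δ⁺,r) − V_k(b−1,Δ⁻,r)] − [V_k(b,Δ⁺,r) − V_k(b,Δ⁻,r)] ≤ 0.
-/

/-- The idle-action Bellman operand `V⁰[V](b,Δ,r)`. -/
def V0op (β q pt : ℝ) (bmax Δmax : ℕ) (V : ℕ × ℕ × ℕ → ℝ) (b Δ r : ℕ) : ℝ :=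
  ∑ z ∈ Finset.range 2, ∑ e ∈ Finset.range 2, ∑ r' ∈ Finset.range 2,
    (if z = 1 then pt else 1 - pt) * (if e = 1 then β else 1 - β) *
    (if r' = 1 then q else 1 - q) *
    ((r : ℝ) * (min (Δ + z) Δmax : ℕ) + V (min (b + e) bmax, min (Δ + z) Δmax, r'))

/-- The transmit-action Bellman operand `V¹[V](b,Δ,r)` (meaningful for `b ≥ 1`). -/
def V1op (β q pt ps : ℝ) (bmax Δmax : ℕ) (V : ℕ × ℕ × ℕ → ℝ) (b Δ r : ℕ) : ℝ :=
  ∑ z ∈ Finset.range 2, ∑ e ∈ Finset.range 2, ∑ r' ∈ Finset.range 2,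
    (if z = 1 then pt else 1 - pt) * (if e = 1 then β else 1 - β) *
    (if r' = 1 then q else 1 - q) *
    ((1 - ps) * ((r : ℝ) * (min (Δ + z) Δmax : ℕ) + V (b + e - 1, min (Δ + z) Δmax, r'))
      + ps * ((r : ℝ) * (z : ℝ) + V (b + e - 1, z, r')))

/-- The value-iteration sequence: `V_0 ≡ 0` and
`V_{k+1}(s) = min (V⁰[V_k] s) (V¹[V_k] s)` when `b ≥ 1` and `r = 1`,
`V_{k+1}(s) = V⁰[V_k] s` otherwise. -/
def Vit (β q pt ps : ℝ) (bmax Δmax : ℕ) : ℕ → (ℕ × ℕ × ℕ → ℝ)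
  | 0 => fun _ => 0
  | k + 1 => fun s =>
      if 1 ≤ s.1 ∧ s.2.2 = 1 then
        min (V0op β q pt bmax Δmax (Vit β q pt ps bmax Δmax k) s.1 s.2.1 s.2.2)
            (V1op β q pt ps bmax Δmax (Vit β q pt ps bmax Δmax k) s.1 s.2.1 s.2.2)
      else
        V0op β q pt bmax Δmax (Vit β q pt ps bmax Δmax k) s.1 s.2.1 s.2.2

/-- Weighted expectation over the three binary variables. -/
def Ex (β q pt : ℝ) (f : ℕ → ℕ → ℕ → ℝ) : ℝ :=
  ∑ z ∈ Finset.range 2, ∑ e ∈ Finset.range 2, ∑ r' ∈ Finset.range 2,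
    (if z = 1 then pt else 1 - pt) * (if e = 1 then β else 1 - β) *
    (if r' = 1 then q else 1 - q) * f z e r'

lemma Ex_mono {β q pt : ℝ} (hβ : 0 ≤ β ∧ β ≤ 1) (hq : 0 ≤ q ∧ q ≤ 1)
    (hpt : 0 ≤ pt ∧ pt ≤ 1) {f g : ℕ → ℕ → ℕ → ℝ}
    (h : ∀ z e r, z ≤ 1 → e ≤ 1 → r ≤ 1 → f z e r ≤ g z e r) :
    Ex β q pt f ≤ Ex β q pt g := by
  unfold Ex
  refine Finset.sum_le_sum fun z hz => Finset.sum_le_sum fun e he =>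
    Finset.sum_le_sum fun r hr => ?_
  rw [Finset.mem_range] at hz he hr
  refine mul_le_mul_of_nonneg_left (h z e r (by omega) (by omega) (by omega)) ?_
  refine mul_nonneg (mul_nonneg ?_ ?_) ?_ <;> split_ifs <;> linarith

lemma Ex_sub (β q pt : ℝ) (f g : ℕ → ℕ → ℕ → ℝ) :
    Ex β q pt f - Ex β q pt g = Ex β q pt (fun z e r => f z e r - g z e r) := by
  simp only [Ex, mul_sub, Finset.sum_sub_distrib]

lemma Ex_smul (β q pt c : ℝ) (f : ℕ → ℕ → ℕ → ℝ) :
    c * Ex β q pt f = Ex β q pt (fun z e r => c * f z e r) := by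
  simp only [Ex, Finset.mul_sum]
  refine Finset.sum_congr rfl fun z _ => Finset.sum_congr rfl fun e _ =>
    Finset.sum_congr rfl fun r _ => ?_
  ring

lemma V0op_eq (β q pt : ℝ) (bmax Δmax : ℕ) (V : ℕ × ℕ × ℕ → ℝ) (b Δ r : ℕ) :
    V0op β q pt bmax Δmax V b Δ r = Ex β q pt (fun z e r' =>
      (r : ℝ) * (min (Δ + z) Δmax : ℕ) + V (min (b + e) bmax, min (Δ + z) Δmax, r')) := rfl

lemma V1op_eq (β q pt ps : ℝ) (bmax Δmax : ℕ) (V : ℕ × ℕ × ℕ → ℝ) (b Δ r : ℕ) :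
    V1op β q pt ps bmax Δmax V b Δ r = Ex β q pt (fun z e r' =>
      (1 - ps) * ((r : ℝ) * (min (Δ + z) Δmax : ℕ) + V (b + e - 1, min (Δ + z) Δmax, r'))
      + ps * ((r : ℝ) * (z : ℝ) + V (b + e - 1, z, r'))) := rfl

lemma cost_mono (Δmax Δm Δp z r : ℕ) (h : Δm ≤ Δp) :
    (r : ℝ) * (min (Δm + z) Δmax : ℕ) ≤ (r : ℝ) * (min (Δp + z) Δmax : ℕ) := by
  have : min (Δm + z) Δmax ≤ min (Δp + z) Δmax := by omega
  gcongr

/-- Monotonicity in the age. -/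
lemma Vit_mono (bmax Δmax : ℕ) (β q pt ps : ℝ)
    (hβ : 0 ≤ β ∧ β ≤ 1) (hq : 0 ≤ q ∧ q ≤ 1)
    (hpt : 0 ≤ pt ∧ pt ≤ 1) (hps : 0 ≤ ps ∧ ps ≤ 1) :
    ∀ (k b r Δm Δp : ℕ), Δm ≤ Δp →
      Vit β q pt ps bmax Δmax k (b, Δm, r) ≤ Vit β q pt ps bmax Δmax k (b, Δp, r) := by
  intro k
  induction k with
  | zero => intros; exact le_refl _
  | succ k ih =>
    intro b r Δm Δp h
    have h0 : V0op β q pt bmax Δmax (Vit β q pt ps bmax Δmax k) b Δm r ≤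
        V0op β q pt bmax Δmax (Vit β q pt ps bmax Δmax k) b Δp r := by
      rw [V0op_eq, V0op_eq]
      refine Ex_mono hβ hq hpt fun z e r' _ _ _ => ?_
      exact add_le_add (cost_mono Δmax Δm Δp z r h) (ih _ _ _ _ (by omega))
    have h1 : V1op β q pt ps bmax Δmax (Vit β q pt ps bmax Δmax k) b Δm r ≤
        V1op β q pt ps bmax Δmax (Vit β q pt ps bmax Δmax k) b Δp r := by
      rw [V1op_eq, V1op_eq]
      refine Ex_mono hβ hq hpt fun z e r' _ _ _ => ?_
      have := mul_le_mul_of_nonneg_left (add_le_add (cost_mono Δmax Δm Δp z r h)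
        (ih (b + e - 1) r' (min (Δm + z) Δmax) (min (Δp + z) Δmax) (by omega)))
        (sub_nonneg.2 hps.2)
      linarith
    simp only [Vit]
    split_ifs
    · exact min_le_min h0 h1
    · exact h0

theorem valueIteration_key_inequality
    (bmax Δmax : ℕ) (hbmax : 1 ≤ bmax) (hΔmax : 1 ≤ Δmax)
    (β q pt ps : ℝ)
    (hβ : 0 ≤ β ∧ β ≤ 1) (hq : 0 ≤ q ∧ q ≤ 1)
    (hpt : 0 ≤ pt ∧ pt ≤ 1) (hps : 0 ≤ ps ∧ ps ≤ 1) :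
    ∀ (k b r Δm Δp : ℕ), 1 ≤ b → b ≤ bmax → r ≤ 1 → Δm ≤ Δp → Δp ≤ Δmax →
      (1 - ps) * (Vit β q pt ps bmax Δmax k (b - 1, Δp, r)
                    - Vit β q pt ps bmax Δmax k (b - 1, Δm, r))
        - (Vit β q pt ps bmax Δmax k (b, Δp, r)
            - Vit β q pt ps bmax Δmax k (b, Δm, r)) ≤ 0 := by
  intro k
  induction k with
  | zero => intros; simp [Vit]
  | succ k ih =>
    intro b r Δm Δp hb1 hb hr hm hp
    have mono := Vit_mono bmax Δmax β q pt ps hβ hq hpt hps k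
    have monoS := Vit_mono bmax Δmax β q pt ps hβ hq hpt hps (k + 1)
    have hp0 : 0 ≤ 1 - ps := sub_nonneg.2 hps.2
    set V := Vit β q pt ps bmax Δmax k with hV
    -- idle versus idle
    have A : (1 - ps) * (V0op β q pt bmax Δmax V (b - 1) Δp r
        - V0op β q pt bmax Δmax V (b - 1) Δm r)
        ≤ V0op β q pt bmax Δmax V b Δp r - V0op β q pt bmax Δmax V b Δm r := by
      simp only [V0op_eq, Ex_sub, Ex_smul]
      refine Ex_mono hβ hq hpt fun z e r' hz he hr' => ?_
      have hc := cost_mono Δmax Δm Δp z r hm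
      have hd : min (Δm + z) Δmax ≤ min (Δp + z) Δmax := by omega
      have hc2 := mul_nonneg hps.1 (sub_nonneg.2 hc)
      have key : (1 - ps) * (V (min (b - 1 + e) bmax, min (Δp + z) Δmax, r')
          - V (min (b - 1 + e) bmax, min (Δm + z) Δmax, r'))
          ≤ V (min (b + e) bmax, min (Δp + z) Δmax, r')
            - V (min (b + e) bmax, min (Δm + z) Δmax, r') := by
        by_cases hbe : b + e ≤ bmax
        · have := ih (b + e) r' _ _ (by omega) hbe hr' hd (by omega)
          have e1 : min (b - 1 + e) bmax = b + e - 1 := by omega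
          have e2 : min (b + e) bmax = b + e := by omega
          rw [e1, e2]; linarith
        · have e1 : min (b - 1 + e) bmax = min (b + e) bmax := by omega
          rw [e1]
          have := mul_nonneg hps.1 (sub_nonneg.2 (mono (min (b + e) bmax) r' _ _ hd))
          linarith
      linarith
    -- transmit at b versus idle at b - 1
    have B : V1op β q pt ps bmax Δmax V b Δp r - V1op β q pt ps bmax Δmax V b Δm r
        ≥ (1 - ps) * (V0op β q pt bmax Δmax V (b - 1) Δp r
        - V0op β q pt bmax Δmax V (b - 1) Δm r) := by
      simp only [V0op_eq, V1op_eq, Ex_sub, Ex_smul]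
      refine Ex_mono hβ hq hpt fun z e r' hz he hr' => ?_
      have e1 : min (b - 1 + e) bmax = b + e - 1 := by omega
      rw [e1]; linarith
    -- transmit at b - 1 versus idle at b - 1
    have C : 1 ≤ b - 1 → V1op β q pt ps bmax Δmax V (b - 1) Δp r
        - V1op β q pt ps bmax Δmax V (b - 1) Δm r
        ≤ V0op β q pt bmax Δmax V (b - 1) Δp r - V0op β q pt bmax Δmax V (b - 1) Δm r := by
      intro hb2
      simp only [V0op_eq, V1op_eq, Ex_sub]
      refine Ex_mono hβ hq hpt fun z e r' hz he hr' => ?_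
      have hc := cost_mono Δmax Δm Δp z r hm
      have hd : min (Δm + z) Δmax ≤ min (Δp + z) Δmax := by omega
      have hc2 := mul_nonneg hps.1 (sub_nonneg.2 hc)
      have := ih (b - 1 + e) r' _ _ (by omega) (by omega) hr' hd (by omega)
      have e1 : min (b - 1 + e) bmax = b - 1 + e := by omega
      rw [e1]; linarith
    -- value difference at b - 1 is at most the idle difference
    have D : Vit β q pt ps bmax Δmax (k + 1) (b - 1, Δp, r)
        - Vit β q pt ps bmax Δmax (k + 1) (b - 1, Δm, r)
        ≤ V0op β q pt bmax Δmax V (b - 1) Δp r - V0op β q pt bmax Δmax V (b - 1) Δm r := by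
      simp only [Vit, ← hV]
      split_ifs with hc
      · have hC := C hc.1
        have m0 := min_le_left (V0op β q pt bmax Δmax V (b - 1) Δp r)
          (V1op β q pt ps bmax Δmax V (b - 1) Δp r)
        have m1 := min_le_right (V0op β q pt bmax Δmax V (b - 1) Δp r)
          (V1op β q pt ps bmax Δmax V (b - 1) Δp r)
        rcases min_choice (V0op β q pt bmax Δmax V (b - 1) Δm r)
          (V1op β q pt ps bmax Δmax V (b - 1) Δm r) with h | h <;> rw [h] <;> linarith
      · exact le_refl _
    have F : (1 - ps) * (V0op β q pt bmax Δmax V (b - 1) Δp r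
        - V0op β q pt bmax Δmax V (b - 1) Δm r)
        ≤ Vit β q pt ps bmax Δmax (k + 1) (b, Δp, r)
        - Vit β q pt ps bmax Δmax (k + 1) (b, Δm, r) := by
      simp only [Vit, ← hV]
      split_ifs with hc
      · have m0 := min_le_left (V0op β q pt bmax Δmax V b Δm r)
          (V1op β q pt ps bmax Δmax V b Δm r)
        have m1 := min_le_right (V0op β q pt bmax Δmax V b Δm r)
          (V1op β q pt ps bmax Δmax V b Δm r)
        rcases min_choice (V0op β q pt bmax Δmax V b Δp r)
          (V1op β q pt ps bmax Δmax V b Δp r) with h | h <;> rw [h] <;> linarith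
      · exact A
    have := mul_le_mul_of_nonneg_left D hp0
    linarith
end

section
/- Let (V_k)_{k∈ℕ} be the value-iteration sequence of the QVAoI status-update MDP with V_0 ≡ 0, and for b ≥ 1 define DV_{k+1}(b,Δ) = V¹[V_k](b,Δ,1) − V⁰[V_k](b,Δ,1). Then for every k ∈ ℕ and every b with 1 ≤ b ≤ b_max, the map Δ ↦ DV_{k+1}(b,Δ) is non-increasing on {0,…,Δ_max}; that is, for all 0 ≤ Δ⁻ ≤ Δ⁺ ≤ Δ_max, DV_{k+1}(b,Δ⁺) ≤ DV_{k+1}(b,Δ⁻). (Hence at each iteration the set of ages at which transmitting is preferred to idling is upward closed, i.e., the greedy policy with respect to V_k has a threshold structure in Δ.) -/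
/-- `DV_{k+1}(b,Δ) = V¹[V_k](b,Δ,1) − V⁰[V_k](b,Δ,1)`. -/
def DV (β q pt ps : ℝ) (bmax Δmax : ℕ) (k b Δ : ℕ) : ℝ :=
  V1op β q pt ps bmax Δmax (Vit β q pt ps bmax Δmax k) b Δ 1
    - V0op β q pt bmax Δmax (Vit β q pt ps bmax Δmax k) b Δ 1

/-- Structural invariant of value iteration. -/
def Good (ps : ℝ) (bmax Δmax : ℕ) (V : ℕ × ℕ × ℕ → ℝ) : Prop :=
  (∀ b m p r, b ≤ bmax → m ≤ p → p ≤ Δmax → V (b, m, r) ≤ V (b, p, r)) ∧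
  (∀ b m p r, b + 1 ≤ bmax → m ≤ p → p ≤ Δmax →
    (1 - ps) * (V (b, p, r) - V (b, m, r)) ≤ V (b + 1, p, r) - V (b + 1, m, r))

lemma ite_nn {x : ℝ} (hx : 0 ≤ x ∧ x ≤ 1) (z : ℕ) : 0 ≤ (if z = 1 then x else 1 - x) := by
  split_ifs <;> linarith [hx.1, hx.2]

lemma good_cap {ps : ℝ} {bmax Δmax : ℕ} {V : ℕ × ℕ × ℕ → ℝ} (hps : 0 ≤ ps ∧ ps ≤ 1)
    (h : Good ps bmax Δmax V) {b c m p r : ℕ} (hb : b ≤ bmax) (hc : c = b ∨ (c = b + 1 ∧ c ≤ bmax))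
    (hm : m ≤ p) (hp : p ≤ Δmax) :
    (1 - ps) * (V (b, p, r) - V (b, m, r)) ≤ V (c, p, r) - V (c, m, r) := by
  rcases hc with rfl | ⟨rfl, hc⟩
  · have := h.1 c m p r hb hm hp
    nlinarith [mul_nonneg hps.1 (sub_nonneg.2 this)]
  · exact h.2 b m p r hc hm hp

section
variable {β q pt ps : ℝ} {bmax Δmax : ℕ} {V : ℕ × ℕ × ℕ → ℝ}

lemma diff_V0 (b m p r : ℕ) :
    V0op β q pt bmax Δmax V b p r - V0op β q pt bmax Δmax V b m r =
    ∑ z ∈ Finset.range 2, ∑ e ∈ Finset.range 2, ∑ r' ∈ Finset.range 2,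
    ((if z = 1 then pt else 1 - pt) * (if e = 1 then β else 1 - β) *
    (if r' = 1 then q else 1 - q)) *
    ((r : ℝ) * (((min (p + z) Δmax : ℕ) : ℝ) - (min (m + z) Δmax : ℕ)) +
      (V (min (b + e) bmax, min (p + z) Δmax, r') - V (min (b + e) bmax, min (m + z) Δmax, r'))) := by
  unfold V0op
  simp only [← Finset.sum_sub_distrib]
  refine Finset.sum_congr rfl fun z _ => Finset.sum_congr rfl fun e _ =>
    Finset.sum_congr rfl fun r' _ => ?_
  ring

lemma diff_V1 (b m p r : ℕ) :
    V1op β q pt ps bmax Δmax V b p r - V1op β q pt ps bmax Δmax V b m r =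
    ∑ z ∈ Finset.range 2, ∑ e ∈ Finset.range 2, ∑ r' ∈ Finset.range 2,
    ((if z = 1 then pt else 1 - pt) * (if e = 1 then β else 1 - β) *
    (if r' = 1 then q else 1 - q)) *
    ((1 - ps) * ((r : ℝ) * (((min (p + z) Δmax : ℕ) : ℝ) - (min (m + z) Δmax : ℕ)) +
      (V (b + e - 1, min (p + z) Δmax, r') - V (b + e - 1, min (m + z) Δmax, r')))) := by
  unfold V1op
  simp only [← Finset.sum_sub_distrib]
  refine Finset.sum_congr rfl fun z _ => Finset.sum_congr rfl fun e _ =>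
    Finset.sum_congr rfl fun r' _ => ?_
  ring

lemma sum_aux (hβ : 0 ≤ β ∧ β ≤ 1) (hq : 0 ≤ q ∧ q ≤ 1) (hpt : 0 ≤ pt ∧ pt ≤ 1)
    {F G : ℕ → ℕ → ℕ → ℝ} (h : ∀ z e r', e ≤ 1 → F z e r' ≤ G z e r') :
    (∑ z ∈ Finset.range 2, ∑ e ∈ Finset.range 2, ∑ r' ∈ Finset.range 2,
    ((if z = 1 then pt else 1 - pt) * (if e = 1 then β else 1 - β) *
    (if r' = 1 then q else 1 - q)) * F z e r') ≤
    ∑ z ∈ Finset.range 2, ∑ e ∈ Finset.range 2, ∑ r' ∈ Finset.range 2,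
    ((if z = 1 then pt else 1 - pt) * (if e = 1 then β else 1 - β) *
    (if r' = 1 then q else 1 - q)) * G z e r' := by
  refine Finset.sum_le_sum fun z _ => Finset.sum_le_sum fun e he =>
    Finset.sum_le_sum fun r' _ => ?_
  refine mul_le_mul_of_nonneg_left (h z e r' ?_) ?_
  · have := Finset.mem_range.1 he
    omega
  · exact mul_nonneg (mul_nonneg (ite_nn hpt z) (ite_nn hβ e)) (ite_nn hq r')

lemma cmul_aux (c : ℝ) (F : ℕ → ℕ → ℕ → ℝ) :
    c * (∑ z ∈ Finset.range 2, ∑ e ∈ Finset.range 2, ∑ r' ∈ Finset.range 2,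
    ((if z = 1 then pt else 1 - pt) * (if e = 1 then β else 1 - β) *
    (if r' = 1 then q else 1 - q)) * F z e r') =
    ∑ z ∈ Finset.range 2, ∑ e ∈ Finset.range 2, ∑ r' ∈ Finset.range 2,
    ((if z = 1 then pt else 1 - pt) * (if e = 1 then β else 1 - β) *
    (if r' = 1 then q else 1 - q)) * (c * F z e r') := by
  simp only [Finset.mul_sum]
  refine Finset.sum_congr rfl fun z _ => Finset.sum_congr rfl fun e _ =>
    Finset.sum_congr rfl fun r' _ => ?_
  ring

lemma age_nn {m p : ℕ} (z r : ℕ) (hm : m ≤ p) :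
    0 ≤ (r : ℝ) * (((min (p + z) Δmax : ℕ) : ℝ) - (min (m + z) Δmax : ℕ)) := by
  refine mul_nonneg (Nat.cast_nonneg r) (sub_nonneg.2 (Nat.cast_le.2 ?_))
  omega

variable {b m p r : ℕ}

lemma diff_V0_nn (hβ : 0 ≤ β ∧ β ≤ 1) (hq : 0 ≤ q ∧ q ≤ 1) (hpt : 0 ≤ pt ∧ pt ≤ 1) (h : Good ps bmax Δmax V)
    (hm : m ≤ p) :
    0 ≤ V0op β q pt bmax Δmax V b p r - V0op β q pt bmax Δmax V b m r := by
  rw [diff_V0]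
  refine le_trans (le_of_eq ?_) (sum_aux hβ hq hpt (F := fun _ _ _ => 0) ?_)
  · simp
  · intro z e r' _
    exact add_nonneg (age_nn z r hm) (sub_nonneg.2 (h.1 _ _ _ _ (by omega) (by omega) (by omega)))

lemma diff_V1_nn (hβ : 0 ≤ β ∧ β ≤ 1) (hq : 0 ≤ q ∧ q ≤ 1) (hpt : 0 ≤ pt ∧ pt ≤ 1) (hps : 0 ≤ ps ∧ ps ≤ 1) (h : Good ps bmax Δmax V)
    (h1 : 1 ≤ b) (hb : b ≤ bmax) (hm : m ≤ p) :
    0 ≤ V1op β q pt ps bmax Δmax V b p r - V1op β q pt ps bmax Δmax V b m r := by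
  rw [diff_V1]
  refine le_trans (le_of_eq ?_) (sum_aux hβ hq hpt (F := fun _ _ _ => 0) ?_)
  · simp
  · intro z e r' _
    exact mul_nonneg (sub_nonneg.2 hps.2) (add_nonneg (age_nn z r hm)
      (sub_nonneg.2 (h.1 _ _ _ _ (by omega) (by omega) (by omega))))

lemma diff_V1_le_V0 (hβ : 0 ≤ β ∧ β ≤ 1) (hq : 0 ≤ q ∧ q ≤ 1) (hpt : 0 ≤ pt ∧ pt ≤ 1) (hps : 0 ≤ ps ∧ ps ≤ 1) (h : Good ps bmax Δmax V)
    (h1 : 1 ≤ b) (hb : b ≤ bmax) (hm : m ≤ p) (_hp : p ≤ Δmax) :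
    V1op β q pt ps bmax Δmax V b p r - V1op β q pt ps bmax Δmax V b m r ≤
    V0op β q pt bmax Δmax V b p r - V0op β q pt bmax Δmax V b m r := by
  rw [diff_V0, diff_V1]
  refine sum_aux hβ hq hpt ?_
  intro z e r' he
  have a := age_nn (Δmax := Δmax) z r hm
  have g := good_cap hps h (b := b + e - 1) (c := min (b + e) bmax) (m := min (m + z) Δmax)
    (p := min (p + z) Δmax) (r := r') (by omega) (by omega) (by omega) (by omega)
  rw [mul_add]
  exact add_le_add (by nlinarith [mul_nonneg hps.1 a]) g

lemma diff_V0_succ (hβ : 0 ≤ β ∧ β ≤ 1) (hq : 0 ≤ q ∧ q ≤ 1) (hpt : 0 ≤ pt ∧ pt ≤ 1) (hps : 0 ≤ ps ∧ ps ≤ 1) (h : Good ps bmax Δmax V)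
    (hb : b + 1 ≤ bmax) (hm : m ≤ p) :
    (1 - ps) * (V0op β q pt bmax Δmax V b p r - V0op β q pt bmax Δmax V b m r) ≤
    V0op β q pt bmax Δmax V (b + 1) p r - V0op β q pt bmax Δmax V (b + 1) m r := by
  rw [diff_V0, diff_V0, cmul_aux]
  refine sum_aux hβ hq hpt ?_
  intro z e r' he
  have a := age_nn (Δmax := Δmax) z r hm
  have g := good_cap hps h (b := min (b + e) bmax) (c := min (b + 1 + e) bmax)
    (m := min (m + z) Δmax)
    (p := min (p + z) Δmax) (r := r') (by omega) (by omega) (by omega) (by omega)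
  rw [mul_add]
  exact add_le_add (by nlinarith [mul_nonneg hps.1 a]) g

lemma diff_V1_succ (hβ : 0 ≤ β ∧ β ≤ 1) (hq : 0 ≤ q ∧ q ≤ 1) (hpt : 0 ≤ pt ∧ pt ≤ 1) (hps : 0 ≤ ps ∧ ps ≤ 1) (h : Good ps bmax Δmax V)
    (h1 : 1 ≤ b) (hb : b + 1 ≤ bmax) (hm : m ≤ p) :
    (1 - ps) * (V1op β q pt ps bmax Δmax V b p r - V1op β q pt ps bmax Δmax V b m r) ≤
    V1op β q pt ps bmax Δmax V (b + 1) p r - V1op β q pt ps bmax Δmax V (b + 1) m r := by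
  rw [diff_V1, diff_V1, cmul_aux]
  refine sum_aux hβ hq hpt ?_
  intro z e r' he
  have a := age_nn (Δmax := Δmax) z r hm
  have g := good_cap hps h (b := b + e - 1) (c := b + 1 + e - 1)
    (m := min (m + z) Δmax)
    (p := min (p + z) Δmax) (r := r') (by omega) (by omega) (by omega) (by omega)
  refine mul_le_mul_of_nonneg_left ?_ (sub_nonneg.2 hps.2)
  rw [mul_add]
  exact add_le_add (by nlinarith [mul_nonneg hps.1 a]) g

lemma diff_V0_V1 (hb : b + 1 ≤ bmax) :
    (1 - ps) * (V0op β q pt bmax Δmax V b p r - V0op β q pt bmax Δmax V b m r) =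
    V1op β q pt ps bmax Δmax V (b + 1) p r - V1op β q pt ps bmax Δmax V (b + 1) m r := by
  rw [diff_V0, diff_V1, cmul_aux]
  refine Finset.sum_congr rfl fun z _ => Finset.sum_congr rfl fun e he =>
    Finset.sum_congr rfl fun r' _ => ?_
  have := Finset.mem_range.1 he
  have e1 : min (b + e) bmax = b + 1 + e - 1 := by omega
  rw [e1]

end

lemma good_Vit {β q pt ps : ℝ} (hβ : 0 ≤ β ∧ β ≤ 1) (hq : 0 ≤ q ∧ q ≤ 1)
    (hpt : 0 ≤ pt ∧ pt ≤ 1) (hps : 0 ≤ ps ∧ ps ≤ 1) (bmax Δmax k : ℕ) :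
    Good ps bmax Δmax (Vit β q pt ps bmax Δmax k) := by
  induction k with
  | zero => constructor <;> intros <;> simp [Vit]
  | succ k ih =>
    have c0 : 0 ≤ 1 - ps := sub_nonneg.2 hps.2
    constructor
    · intro b m p r hb hm hp
      have n0 := diff_V0_nn hβ hq hpt ih (b := b) (r := r) hm
      simp only [Vit]
      split_ifs with hc
      · have n1 := diff_V1_nn hβ hq hpt hps ih (r := r) hc.1 hb hm
        exact min_le_min (by linarith) (by linarith)
      · linarith
    · intro b m p r hb hm hp
      have s0 := diff_V0_succ hβ hq hpt hps ih (r := r) hb hm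
      have s01 := diff_V0_V1 (β := β) (q := q) (pt := pt) (ps := ps) (Δmax := Δmax)
        (V := Vit β q pt ps bmax Δmax k) (m := m) (p := p) (r := r) hb
      simp only [Vit]
      by_cases hr : r = 1
      · rw [if_pos (show 1 ≤ b + 1 ∧ r = 1 from ⟨by omega, hr⟩),
          if_pos (show 1 ≤ b + 1 ∧ r = 1 from ⟨by omega, hr⟩)]
        set A0 := V0op β q pt bmax Δmax (Vit β q pt ps bmax Δmax k) b p r
        set B0 := V0op β q pt bmax Δmax (Vit β q pt ps bmax Δmax k) b m r
        set C0 := V0op β q pt bmax Δmax (Vit β q pt ps bmax Δmax k) (b + 1) p r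
        set D0 := V0op β q pt bmax Δmax (Vit β q pt ps bmax Δmax k) (b + 1) m r
        set C1 := V1op β q pt ps bmax Δmax (Vit β q pt ps bmax Δmax k) (b + 1) p r
        set D1 := V1op β q pt ps bmax Δmax (Vit β q pt ps bmax Δmax k) (b + 1) m r
        have d0 := min_le_left D0 D1
        have d1 := min_le_right D0 D1
        have idle : (1 - ps) * (A0 - B0) ≤ min C0 C1 - min D0 D1 := by
          rcases min_choice C0 C1 with hC | hC <;> rw [hC] <;> linarith
        by_cases h1 : 1 ≤ b
        · rw [if_pos ⟨h1, hr⟩, if_pos ⟨h1, hr⟩]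
          have s1 := diff_V1_succ hβ hq hpt hps ih (r := r) h1 hb hm
          have s10 := mul_le_mul_of_nonneg_left
            (diff_V1_le_V0 hβ hq hpt hps ih (r := r) h1 (by omega) hm hp) c0
          set A1 := V1op β q pt ps bmax Δmax (Vit β q pt ps bmax Δmax k) b p r
          set B1 := V1op β q pt ps bmax Δmax (Vit β q pt ps bmax Δmax k) b m r
          rcases min_choice B0 B1 with hB | hB
          · rw [hB]
            refine le_trans (mul_le_mul_of_nonneg_left ?_ c0) idle
            linarith [min_le_left A0 A1]
          · rw [hB]
            refine le_trans (mul_le_mul_of_nonneg_left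
              (sub_le_sub_right (min_le_right A0 A1) B1) c0) ?_
            linarith
        · rw [if_neg (fun hh => h1 hh.1), if_neg (fun hh => h1 hh.1)]
          exact idle
      · simpa [hr] using s0

theorem DV_antitone_in_age
    (bmax Δmax : ℕ) (hbmax : 1 ≤ bmax) (hΔmax : 1 ≤ Δmax)
    (β q pt ps : ℝ)
    (hβ : 0 ≤ β ∧ β ≤ 1) (hq : 0 ≤ q ∧ q ≤ 1)
    (hpt : 0 ≤ pt ∧ pt ≤ 1) (hps : 0 ≤ ps ∧ ps ≤ 1) :
    ∀ (k b Δm Δp : ℕ), 1 ≤ b → b ≤ bmax → Δm ≤ Δp → Δp ≤ Δmax →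
      DV β q pt ps bmax Δmax k b Δp ≤ DV β q pt ps bmax Δmax k b Δm := by
  intro k b Δm Δp h1 hb hm hp
  have := diff_V1_le_V0 hβ hq hpt hps (good_Vit hβ hq hpt hps bmax Δmax k) (r := 1) h1 hb hm hp
  unfold DV
  linarith
end

section
/- Let μ be a stationary distribution of the single-battery QVAoI Markov chain with threshold Δ_T = 0 (the greedy policy). Then μ(0,0) = (p̄_t · β · β̄) / (β + p_t · β̄). -/
/-- A stationary distribution of the single-battery QVAoI Markov chain with threshold
`Δ_T = 0` (the greedy policy), given as the pair of functions `μ0 Δ = μ(0,Δ)` and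
`μ1 Δ = μ(1,Δ)`. Here `γ00 = (1−p_t)(1−β)`, `γ01 = (1−p_t)β`, `γ10 = p_t(1−β)`,
`γ11 = p_t β`, and `S = Σ_{δ=0}^∞ μ(1,δ)`. -/
structure IsStationaryT0 (pt β : ℝ) (μ0 μ1 : ℕ → ℝ) : Prop where
  nonneg0 : ∀ Δ, 0 ≤ μ0 Δ
  nonneg1 : ∀ Δ, 0 ≤ μ1 Δ
  summable0 : Summable μ0
  summable1 : Summable μ1
  total : (∑' Δ, μ0 Δ) + (∑' Δ, μ1 Δ) = 1
  bal00 : μ0 0 = (1 - pt) * (1 - β) * μ0 0 + (1 - pt) * (1 - β) * (∑' δ, μ1 δ)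
  bal01 : μ0 1 = pt * (1 - β) * μ0 0 + (1 - pt) * (1 - β) * μ0 1
      + pt * (1 - β) * (∑' δ, μ1 δ)
  bal0  : ∀ Δ, 2 ≤ Δ → μ0 Δ = (1 - pt) * (1 - β) * μ0 Δ + pt * (1 - β) * μ0 (Δ - 1)
  bal10 : μ1 0 = (1 - pt) * β * μ0 0 + (1 - pt) * β * (∑' δ, μ1 δ)
  bal11 : μ1 1 = pt * β * μ0 0 + (1 - pt) * β * μ0 1 + pt * β * (∑' δ, μ1 δ)
  bal1  : ∀ Δ, 2 ≤ Δ → μ1 Δ = pt * β * μ0 (Δ - 1) + (1 - pt) * β * μ0 Δ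

/-- `μ(0,0) = p̄_t·β·β̄ / (β + p_t·β̄)` for the greedy (threshold 0) chain. -/
theorem stationary_T0_mu00
    (pt β : ℝ) (hpt : 0 < pt ∧ pt < 1) (hβ : 0 < β ∧ β < 1)
    (μ0 μ1 : ℕ → ℝ) (hμ : IsStationaryT0 pt β μ0 μ1) :
    μ0 0 = ((1 - pt) * β * (1 - β)) / (β + pt * (1 - β)) := by
  have hA := hμ.summable0.sum_add_tsum_nat_add 1
  have hs1 : Summable (fun n => μ0 (n + 1)) := (summable_nat_add_iff 1).2 hμ.summable0
  have hs2 : Summable (fun n => μ0 (n + 2)) := (summable_nat_add_iff 2).2 hμ.summable0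
  have hB := hμ.summable0.sum_add_tsum_nat_add 2
  have hT : ∑' n, μ0 (n + 2) = (1 - pt) * (1 - β) * (∑' n, μ0 (n + 2))
      + pt * (1 - β) * (∑' n, μ0 (n + 1)) := by
    rw [← tsum_mul_left, ← tsum_mul_left, ← (hs2.mul_left _).tsum_add (hs1.mul_left _)]
    exact tsum_congr fun n => hμ.bal0 (n + 2) (by omega)
  simp only [Finset.sum_range_succ, Finset.sum_range_zero, zero_add] at hA hB
  have h00 := hμ.bal00
  have h01 := hμ.bal01
  have ht := hμ.total
  generalize (∑' n, μ0 (n + 2)) = T at *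
  generalize (∑' n, μ0 (n + 1)) = U at *
  generalize (∑' n, μ0 n) = A at *
  generalize (∑' n, μ1 n) = S at *
  have hS : S = β := by
    have hA' : A = (1 - β) * (A + S) := by
      have e1 : U = μ0 1 + T := by linarith
      subst e1
      rw [← hA]
      linear_combination h00 + h01 + hT
    rw [ht] at hA'
    linarith
  subst hS
  have hpos : 0 < S + pt * (1 - S) := by
    have := mul_pos hpt.1 (sub_pos.2 hβ.2)
    linarith [hβ.1]
  rw [eq_div_iff hpos.ne']
  linear_combination h00
end

section
/- Let μ be a stationary distribution of the single-battery QVAoI Markov chain with threshold Δ_T = 0 (the greedy policy), and assume additionally that the weighted series Σ_{Δ=0}^{∞} Δ·μ(0,Δ) and Σ_{Δ=0}^{∞} Δ·μ(1,Δ) converge. Then the average QVAoI equals Σ_{b∈{0,1}} Σ_{Δ=0}^{∞} Δ·μ(b,Δ) = p_t / β. -/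
/-- the average QVAoI of the greedy (threshold 0) chain equals `p_t/β`. -/
theorem stationary_T0_average_QVAoI
    (pt β : ℝ) (hpt : 0 < pt ∧ pt < 1) (hβ : 0 < β ∧ β < 1)
    (μ0 μ1 : ℕ → ℝ) (hμ : IsStationaryT0 pt β μ0 μ1)
    (hw0 : Summable (fun Δ : ℕ => (Δ : ℝ) * μ0 Δ))
    (hw1 : Summable (fun Δ : ℕ => (Δ : ℝ) * μ1 Δ)) :
    (∑' Δ : ℕ, (Δ : ℝ) * μ0 Δ) + (∑' Δ : ℕ, (Δ : ℝ) * μ1 Δ) = pt / β := by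
  have cong : ∀ (f g : ℕ → ℝ) (a : ℝ), HasSum f a → (∀ n, g n = f n) → HasSum g a := by
    intro f g a h hfg
    rw [funext hfg]
    exact h
  have key : ∀ f : ℕ → ℝ, Summable (fun n : ℕ => (n : ℝ) * f n) →
      HasSum (fun n : ℕ => ((n + 1 : ℕ) : ℝ) * f (n + 1)) (∑' n : ℕ, (n : ℝ) * f n) := by
    intro f hf
    have h := (hasSum_nat_add_iff' (f := fun n : ℕ => (n : ℝ) * f n) 1).mpr hf.hasSum
    simpa using h
  have h0 := key μ0 hw0
  have h1 := key μ1 hw1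
  have hs := hasSum_ite_eq (0 : ℕ) (∑' δ, μ1 δ)
  have hsh := hw0.hasSum.add hμ.summable0.hasSum
  have e0 : (∑' Δ : ℕ, (Δ : ℝ) * μ0 Δ) = (1 - pt) * (1 - β) * (∑' Δ : ℕ, (Δ : ℝ) * μ0 Δ)
      + pt * (1 - β) * ((∑' Δ : ℕ, (Δ : ℝ) * μ0 Δ) + ∑' Δ, μ0 Δ) + pt * (1 - β) * (∑' Δ, μ1 Δ) := by
    refine h0.unique ?_
    have := ((h0.mul_left ((1 - pt) * (1 - β))).add (hsh.mul_left (pt * (1 - β)))).add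
      (hs.mul_left (pt * (1 - β)))
    refine cong _ _ _ this ?_
    intro n
    rcases n with _ | n
    · have := hμ.bal01
      simp only [zero_add, if_true]
      push_cast
      linear_combination this
    · have := hμ.bal0 (n + 1 + 1) (by omega)
      simp only [Nat.add_sub_cancel] at this
      simp only [Nat.add_eq_zero_iff, one_ne_zero, and_false, if_false]
      push_cast
      linear_combination ((n : ℝ) + 1 + 1) * this
  have e1 : (∑' Δ : ℕ, (Δ : ℝ) * μ1 Δ) = (1 - pt) * β * (∑' Δ : ℕ, (Δ : ℝ) * μ0 Δ)
      + pt * β * ((∑' Δ : ℕ, (Δ : ℝ) * μ0 Δ) + ∑' Δ, μ0 Δ) + pt * β * (∑' Δ, μ1 Δ) := by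
    refine h1.unique ?_
    have := ((h0.mul_left ((1 - pt) * β)).add (hsh.mul_left (pt * β))).add
      (hs.mul_left (pt * β))
    refine cong _ _ _ this ?_
    intro n
    rcases n with _ | n
    · have := hμ.bal11
      simp only [zero_add, if_true]
      push_cast
      linear_combination this
    · have := hμ.bal1 (n + 1 + 1) (by omega)
      simp only [Nat.add_sub_cancel] at this
      simp only [Nat.add_eq_zero_iff, one_ne_zero, and_false, if_false]
      push_cast
      linear_combination ((n : ℝ) + 1 + 1) * this
  have ht := hμ.total
  rw [eq_div_iff hβ.1.ne']
  generalize (∑' Δ : ℕ, (Δ : ℝ) * μ0 Δ) = A at *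
  generalize (∑' Δ : ℕ, (Δ : ℝ) * μ1 Δ) = B at *
  generalize (∑' Δ : ℕ, μ0 Δ) = M at *
  generalize (∑' Δ : ℕ, μ1 Δ) = S at *
  linear_combination (1 + β) * e0 + β * e1 + (pt * (1 - β) * (1 + β) + pt * β * β) * ht
end

section
/- Let μ be a stationary distribution of the single-battery QVAoI Markov chain with threshold Δ_T = 0 (the greedy policy). Then the empty-battery stationary probabilities decay geometrically: for every Δ ≥ 1, μ(0,Δ) = ( (p_t·β̄)/(β + p_t·β̄) )^{Δ−1} · μ(0,1). -/
/-- geometric decay of the empty-battery stationary probabilities: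
for every `Δ ≥ 1`, `μ(0,Δ) = ((p_t·β̄)/(β + p_t·β̄))^(Δ−1) · μ(0,1)`. -/
theorem stationary_T0_geometric_decay
    (pt β : ℝ) (hpt : 0 < pt ∧ pt < 1) (hβ : 0 < β ∧ β < 1)
    (μ0 μ1 : ℕ → ℝ) (hμ : IsStationaryT0 pt β μ0 μ1) :
    ∀ Δ : ℕ, 1 ≤ Δ →
      μ0 Δ = ((pt * (1 - β)) / (β + pt * (1 - β))) ^ (Δ - 1) * μ0 1 := by
  have hd : 0 < β + pt * (1 - β) := by
    have := mul_pos hpt.1 (sub_pos.mpr hβ.2)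
    linarith [hβ.1]
  intro Δ hΔ
  induction Δ, hΔ using Nat.le_induction with
  | base => simp
  | succ n hn ih =>
    obtain ⟨m, rfl⟩ : ∃ m, n = m + 1 := ⟨n - 1, by omega⟩
    have h := hμ.bal0 (m + 1 + 1) (by omega)
    simp only [Nat.add_sub_cancel] at h ih ⊢
    have h2 : μ0 (m + 1 + 1) = (pt * (1 - β)) / (β + pt * (1 - β)) * μ0 (m + 1) := by
      rw [div_mul_eq_mul_div, eq_div_iff hd.ne']
      linarith
    rw [h2, ih, pow_succ]
    ring
end

section
/- Let μ be a stationary distribution of the single-battery QVAoI Markov chain with threshold Δ_T = 1. Then μ(0,0) = (p_t · p̄_t · β · β̄) / (β² + p_t·β̄·(p_t + β)). -/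
/-- A stationary distribution of the single-battery QVAoI Markov chain with threshold
`Δ_T = 1`, given as the pair of functions `μ0 Δ = μ(0,Δ)` and `μ1 Δ = μ(1,Δ)`.
Here `γ00 = (1−p_t)(1−β)`, `γ01 = (1−p_t)β`, `γ10 = p_t(1−β)`, `γ11 = p_t β`, and
`S = Σ_{δ=1}^∞ μ(1,δ)`, written below as `∑' δ, μ1 (δ + 1)`. -/
structure IsStationaryT1 (pt β : ℝ) (μ0 μ1 : ℕ → ℝ) : Prop where
  nonneg0 : ∀ Δ, 0 ≤ μ0 Δ
  nonneg1 : ∀ Δ, 0 ≤ μ1 Δ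
  summable0 : Summable μ0
  summable1 : Summable μ1
  total : (∑' Δ, μ0 Δ) + (∑' Δ, μ1 Δ) = 1
  bal00 : μ0 0 = (1 - pt) * (1 - β) * μ0 0
      + (1 - pt) * (1 - β) * (∑' δ, μ1 (δ + 1))
  bal01 : μ0 1 = pt * (1 - β) * μ0 0 + (1 - pt) * (1 - β) * μ0 1
      + pt * (1 - β) * (∑' δ, μ1 (δ + 1))
  bal0  : ∀ Δ, 2 ≤ Δ → μ0 Δ = (1 - pt) * (1 - β) * μ0 Δ + pt * (1 - β) * μ0 (Δ - 1)
  bal10 : μ1 0 = (1 - pt) * β * μ0 0 + (1 - pt) * μ1 0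
      + (1 - pt) * β * (∑' δ, μ1 (δ + 1))
  bal11 : μ1 1 = pt * β * μ0 0 + (1 - pt) * β * μ0 1 + pt * μ1 0
      + pt * β * (∑' δ, μ1 (δ + 1))
  bal1  : ∀ Δ, 2 ≤ Δ → μ1 Δ = pt * β * μ0 (Δ - 1) + (1 - pt) * β * μ0 Δ

/-- `μ(0,0) = p_t·p̄_t·β·β̄ / (β² + p_t·β̄·(p_t + β))` for the
threshold-1 chain. -/
theorem stationary_T1_mu00
    (pt β : ℝ) (hpt : 0 < pt ∧ pt < 1) (hβ : 0 < β ∧ β < 1)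
    (μ0 μ1 : ℕ → ℝ) (hμ : IsStationaryT1 pt β μ0 μ1) :
    μ0 0 = (pt * (1 - pt) * β * (1 - β)) / (β ^ 2 + pt * (1 - β) * (pt + β)) := by
  obtain ⟨hp0, hp1⟩ := hpt
  obtain ⟨hb0, hb1⟩ := hβ
  have s1 : Summable (fun n => μ0 (n + 1)) := (summable_nat_add_iff 1).2 hμ.summable0
  have s2 : Summable (fun n => μ0 (n + 1 + 1)) :=
    (summable_nat_add_iff (f := fun n => μ0 (n + 1)) 1).2 s1
  have e0 : ∑' n, μ0 n = μ0 0 + ∑' n, μ0 (n + 1) := hμ.summable0.tsum_eq_zero_add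
  have e1 : ∑' n, μ0 (n + 1) = μ0 1 + ∑' n, μ0 (n + 1 + 1) := s1.tsum_eq_zero_add
  have e2 : ∑' n, μ1 n = μ1 0 + ∑' n, μ1 (n + 1) := hμ.summable1.tsum_eq_zero_add
  have e3 : ∑' n, μ0 (n + 1 + 1) = (1 - pt) * (1 - β) * (∑' n, μ0 (n + 1 + 1))
      + pt * (1 - β) * ∑' n, μ0 (n + 1) := by
    rw [← tsum_mul_left, ← tsum_mul_left, ← (s2.mul_left _).tsum_add (s1.mul_left _)]
    exact tsum_congr fun n => hμ.bal0 (n + 1 + 1) (by omega)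
  have ht := hμ.total
  have h00 := hμ.bal00
  have h01 := hμ.bal01
  have h10 := hμ.bal10
  rw [e0, e2] at ht
  generalize (∑' n, μ0 (n + 1 + 1)) = B at *
  generalize (∑' n, μ0 (n + 1)) = A at *
  generalize (∑' n, μ1 (n + 1)) = S at *
  have hA : β * A = pt * (1 - β) * (μ0 0 + S) := by
    linear_combination (1 - (1 - pt) * (1 - β)) * e1 + h01 + e3
  have hm : pt * μ1 0 = (1 - pt) * β * (μ0 0 + S) := by linear_combination h10
  have hx : μ0 0 = (1 - pt) * (1 - β) * (μ0 0 + S) := by linear_combination h00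
  have hT : (μ0 0 + S) * (β ^ 2 + pt * (1 - β) * (pt + β)) = pt * β := by
    linear_combination pt * β * ht - pt * hA - β * hm
  have hc : 0 < 1 - β := by linarith
  have hD : 0 < β ^ 2 + pt * (1 - β) * (pt + β) := by positivity
  rw [eq_div_iff hD.ne']
  linear_combination (β ^ 2 + pt * (1 - β) * (pt + β)) * hx + (1 - pt) * (1 - β) * hT
end

section
/- Let μ be a stationary distribution of the single-battery QVAoI Markov chain with threshold Δ_T = 1, and assume additionally that the weighted series Σ_{Δ=0}^{∞} Δ·μ(0,Δ) and Σ_{Δ=0}^{∞} Δ·μ(1,Δ) converge. Then the average QVAoI equals Σ_{b∈{0,1}} Σ_{Δ=0}^{∞} Δ·μ(b,Δ) = (p_t/β) · ( 1 − (p̄_t·β̄·β²)/(β² + p_t·β̄·(p_t + β)) ). -/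
/-- the average QVAoI of the threshold-1 chain equals
`(p_t/β)·(1 − p̄_t·β̄·β²/(β² + p_t·β̄·(p_t + β)))`. -/
theorem stationary_T1_average_QVAoI
    (pt β : ℝ) (hpt : 0 < pt ∧ pt < 1) (hβ : 0 < β ∧ β < 1)
    (μ0 μ1 : ℕ → ℝ) (hμ : IsStationaryT1 pt β μ0 μ1)
    (hw0 : Summable (fun Δ : ℕ => (Δ : ℝ) * μ0 Δ))
    (hw1 : Summable (fun Δ : ℕ => (Δ : ℝ) * μ1 Δ)) :
    (∑' Δ : ℕ, (Δ : ℝ) * μ0 Δ) + (∑' Δ : ℕ, (Δ : ℝ) * μ1 Δ)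
      = (pt / β) * (1 - ((1 - pt) * (1 - β) * β ^ 2)
          / (β ^ 2 + pt * (1 - β) * (pt + β))) := by
  obtain ⟨hp0, hp1⟩ := hpt
  obtain ⟨hb0, hb1⟩ := hβ
  obtain ⟨-, -, s0, s1, tot, b00, b01, b0, b10, b11, b1⟩ := hμ
  have s0' : Summable (fun n => μ0 (n + 1)) := (summable_nat_add_iff 1).2 s0
  have s1' : Summable (fun n => μ1 (n + 1)) := (summable_nat_add_iff 1).2 s1
  have w0' : Summable (fun n : ℕ => ((n + 1 : ℕ) : ℝ) * μ0 (n + 1)) :=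
    (summable_nat_add_iff 1).2 hw0
  have w1' : Summable (fun n : ℕ => ((n + 1 : ℕ) : ℝ) * μ1 (n + 1)) :=
    (summable_nat_add_iff 1).2 hw1
  have s0'' : Summable (fun n => μ0 (n + 1 + 1)) := (summable_nat_add_iff 1).2 s0'
  have w0'' : Summable (fun n : ℕ => ((n + 1 + 1 : ℕ) : ℝ) * μ0 (n + 1 + 1)) :=
    (summable_nat_add_iff 1).2 w0'
  have e0 := s0.tsum_eq_zero_add
  have e1 := s1.tsum_eq_zero_add
  have e2 := s0'.tsum_eq_zero_add
  have e3 := s1'.tsum_eq_zero_add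
  have e4 := hw0.tsum_eq_zero_add
  have e5 := hw1.tsum_eq_zero_add
  have e6 := w0'.tsum_eq_zero_add
  have e7 := w1'.tsum_eq_zero_add
  have q0 : ∀ n, μ0 (n + 1 + 1) = (1 - pt) * (1 - β) * μ0 (n + 1 + 1)
      + pt * (1 - β) * μ0 (n + 1) := fun n => b0 (n + 1 + 1) (by omega)
  have q1 : ∀ n, μ1 (n + 1 + 1) = pt * β * μ0 (n + 1) + (1 - pt) * β * μ0 (n + 1 + 1) :=
    fun n => b1 (n + 1 + 1) (by omega)
  have f0 : (∑' n, μ0 (n + 1 + 1)) = (1 - pt) * (1 - β) * (∑' n, μ0 (n + 1 + 1))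
      + pt * (1 - β) * ∑' n, μ0 (n + 1) := by
    rw [← tsum_mul_left, ← tsum_mul_left,
      ← (s0''.mul_left _).tsum_add (s0'.mul_left _)]
    exact tsum_congr q0
  have f2 : (∑' n : ℕ, ((n + 1 + 1 : ℕ) : ℝ) * μ0 (n + 1 + 1))
      = (1 - pt) * (1 - β) * (∑' n : ℕ, ((n + 1 + 1 : ℕ) : ℝ) * μ0 (n + 1 + 1))
      + pt * (1 - β) * ((∑' n : ℕ, ((n + 1 : ℕ) : ℝ) * μ0 (n + 1)) + ∑' n, μ0 (n + 1)) := by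
    rw [← w0'.tsum_add s0', ← tsum_mul_left, ← tsum_mul_left,
      ← (w0''.mul_left _).tsum_add ((w0'.add s0').mul_left _)]
    refine tsum_congr fun n => ?_
    have := q0 n
    push_cast
    linear_combination ((n : ℝ) + 1 + 1) * this
  have f3 : (∑' n : ℕ, ((n + 1 + 1 : ℕ) : ℝ) * μ1 (n + 1 + 1))
      = (1 - pt) * β * (∑' n : ℕ, ((n + 1 + 1 : ℕ) : ℝ) * μ0 (n + 1 + 1))
      + pt * β * ((∑' n : ℕ, ((n + 1 : ℕ) : ℝ) * μ0 (n + 1)) + ∑' n, μ0 (n + 1)) := by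
    rw [← w0'.tsum_add s0', ← tsum_mul_left, ← tsum_mul_left,
      ← (w0''.mul_left _).tsum_add ((w0'.add s0').mul_left _)]
    refine tsum_congr fun n => ?_
    have := q1 n
    push_cast
    linear_combination ((n : ℝ) + 1 + 1) * this
  clear q0 q1 b0 b1
  rw [e4, e5]
  rw [e0, e1] at tot
  clear e0 e1 e3 e4 e5
  simp only [Nat.cast_zero, zero_mul, zero_add, Nat.cast_one, one_mul] at *
  generalize (∑' n : ℕ, ((n + 1 + 1 : ℕ) : ℝ) * μ0 (n + 1 + 1)) = B2 at *
  generalize (∑' n : ℕ, ((n + 1 + 1 : ℕ) : ℝ) * μ1 (n + 1 + 1)) = C2 at *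
  generalize (∑' n : ℕ, ((n + 1 : ℕ) : ℝ) * μ0 (n + 1)) = B at *
  generalize (∑' n : ℕ, ((n + 1 : ℕ) : ℝ) * μ1 (n + 1)) = C at *
  generalize (∑' n, μ0 (n + 1 + 1)) = A2 at *
  generalize (∑' n, μ0 (n + 1)) = A at *
  generalize (∑' n, μ1 (n + 1)) = S at *
  generalize μ0 0 = a at *
  generalize μ0 1 = x at *
  generalize μ1 0 = m at *
  generalize μ1 1 = y at *
  obtain ⟨u, hu⟩ : ∃ u, u = a + S := ⟨_, rfl⟩
  have hA : β * A = pt * (1 - β) * u := by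
    subst hu; linear_combination b01 + f0 + (1 - (1 - pt) * (1 - β)) * e2
  have hB : β * B = pt * (1 - β) * (u + A) := by
    subst hu; linear_combination b01 + f2 + (1 - (1 - pt) * (1 - β)) * e6
  have hm : pt * m = (1 - pt) * β * u := by subst hu; linear_combination b10
  have hC : C = β * u + β * B + pt * β * A := by
    subst hu; linear_combination e7 + f3 + b11 + hm - (1 - pt) * β * e6
  have ht : u + A + m = 1 := by subst hu; linear_combination tot
  have hD : 0 < β ^ 2 + pt * (1 - β) * (pt + β) := by
    have : 0 < 1 - β := by linarith
    positivity
  have hU : (β ^ 2 + pt * (1 - β) * (pt + β)) * u = pt * β := by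
    linear_combination pt * β * ht - pt * hA - β * hm
  have hA' : A = pt * (1 - β) * u / β := by field_simp; linarith
  have hB' : B = pt * (1 - β) * (u + A) / β := by field_simp; linarith
  have hU' : u = pt * β / (β ^ 2 + pt * (1 - β) * (pt + β)) := by
    rw [eq_div_iff hD.ne']; linarith
  rw [hC, hB', hA', hU']
  field_simp
  ring
end

section
/- Fix an integer Δ_T ≥ 2 and let μ be a stationary distribution of the single-battery QVAoI Markov chain with threshold Δ_T. Then μ(0,0) = (p_t · p̄_t · β · β̄) / ( (β + p_t·β̄) · [ β·Δ_T + p_t · ( (p_t·β̄)/(β + p_t·β̄) )^{Δ_T} ] ). -/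
/-- A stationary distribution of the single-battery QVAoI Markov chain with threshold
`ΔT ≥ 2`, given as the pair of functions `μ0 Δ = μ(0,Δ)` and `μ1 Δ = μ(1,Δ)`.
Here `γ00 = (1−p_t)(1−β)`, `γ01 = (1−p_t)β`, `γ10 = p_t(1−β)`, `γ11 = p_t β`, and
`S = Σ_{δ=ΔT}^∞ μ(1,δ)`, written below as `∑' δ, μ1 (δ + ΔT)`. -/
structure IsStationaryT (pt β : ℝ) (ΔT : ℕ) (μ0 μ1 : ℕ → ℝ) : Prop where
  nonneg0 : ∀ Δ, 0 ≤ μ0 Δ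
  nonneg1 : ∀ Δ, 0 ≤ μ1 Δ
  summable0 : Summable μ0
  summable1 : Summable μ1
  total : (∑' Δ, μ0 Δ) + (∑' Δ, μ1 Δ) = 1
  bal00 : μ0 0 = (1 - pt) * (1 - β) * μ0 0
      + (1 - pt) * (1 - β) * (∑' δ, μ1 (δ + ΔT))
  bal01 : μ0 1 = pt * (1 - β) * μ0 0 + (1 - pt) * (1 - β) * μ0 1
      + pt * (1 - β) * (∑' δ, μ1 (δ + ΔT))
  bal0  : ∀ Δ, 2 ≤ Δ → μ0 Δ = (1 - pt) * (1 - β) * μ0 Δ + pt * (1 - β) * μ0 (Δ - 1)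
  bal10 : μ1 0 = (1 - pt) * β * μ0 0 + (1 - pt) * μ1 0
      + (1 - pt) * β * (∑' δ, μ1 (δ + ΔT))
  bal11 : μ1 1 = pt * β * μ0 0 + (1 - pt) * β * μ0 1 + pt * μ1 0 + (1 - pt) * μ1 1
      + pt * β * (∑' δ, μ1 (δ + ΔT))
  bal1mid : ∀ Δ, 2 ≤ Δ → Δ < ΔT →
      μ1 Δ = pt * β * μ0 (Δ - 1) + (1 - pt) * β * μ0 Δ
        + pt * μ1 (Δ - 1) + (1 - pt) * μ1 Δ
  bal1T : μ1 ΔT = pt * β * μ0 (ΔT - 1) + (1 - pt) * β * μ0 ΔT + pt * μ1 (ΔT - 1)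
  bal1high : ∀ Δ, ΔT + 1 ≤ Δ →
      μ1 Δ = pt * β * μ0 (Δ - 1) + (1 - pt) * β * μ0 Δ

/-- for threshold `ΔT ≥ 2`,
`μ(0,0) = p_t·p̄_t·β·β̄ / ((β + p_t·β̄)·[β·ΔT + p_t·((p_t·β̄)/(β + p_t·β̄))^ΔT])`. -/
theorem stationary_T_mu00
    (pt β : ℝ) (hpt : 0 < pt ∧ pt < 1) (hβ : 0 < β ∧ β < 1)
    (ΔT : ℕ) (hΔT : 2 ≤ ΔT)
    (μ0 μ1 : ℕ → ℝ) (hμ : IsStationaryT pt β ΔT μ0 μ1) :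
    μ0 0 = (pt * (1 - pt) * β * (1 - β))
      / ((β + pt * (1 - β))
          * (β * ΔT + pt * ((pt * (1 - β)) / (β + pt * (1 - β))) ^ ΔT)) := by
  obtain ⟨hp0, hp1⟩ := hpt
  obtain ⟨hb0, hb1⟩ := hβ
  obtain ⟨-, -, hs0, hs1, htot, h00, h01, h0, h10, h11, h1m, -, -⟩ := hμ
  have hsplit := hs1.sum_add_tsum_nat_add ΔT
  set S := ∑' δ, μ1 (δ + ΔT) with hS
  have hD : 0 < β + pt * (1 - β) := by nlinarith
  set D := β + pt * (1 - β) with hDdef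
  set r := pt * (1 - β) / D with hr
  have hrD : r * D = pt * (1 - β) := by rw [hr]; field_simp
  have hr0 : 0 ≤ r := by rw [hr]; exact div_nonneg (by nlinarith) hD.le
  have h1r : (1 - r) * D = β := by linear_combination hDdef - hrD
  have hr1 : r < 1 := by nlinarith
  obtain ⟨A, hA⟩ : ∃ A, A = μ0 0 + S := ⟨_, rfl⟩
  have ha : μ0 0 = (1 - pt) * (1 - β) * A := by rw [hA]; linarith
  have hSA : S = D * A := by
    linear_combination hA.symm - ha - A * hDdef
  -- the idle states
  have hm0 : ∀ n, μ0 (n + 1) = A * r ^ (n + 1) := by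
    intro n
    induction n with
    | zero =>
      apply mul_right_cancel₀ hD.ne'
      simp only [zero_add, pow_one]
      linear_combination h01 - pt * (1 - β) * hA - A * hrD + μ0 1 * hDdef
    | succ n ih =>
      have h := h0 (n + 2) (by omega)
      have e : n + 2 - 1 = n + 1 := by omega
      rw [e, ih] at h
      apply mul_right_cancel₀ hD.ne'
      have e2 : n + 1 + 1 = n + 2 := rfl
      rw [e2, pow_succ r (n + 1)]
      linear_combination h - A * r ^ (n + 1) * hrD + μ0 (n + 2) * hDdef
  have hsum0 : ∑' n, μ0 n = μ0 0 + A * r * (1 - r)⁻¹ := by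
    rw [hs0.tsum_eq_zero_add]
    congr 1
    rw [← tsum_geometric_of_lt_one hr0 hr1, ← tsum_mul_left]
    congr 1
    ext n
    rw [hm0, pow_succ]; ring
  have hpr : (pt + (1 - pt) * r) = pt * (1 - r) + r := by ring
  have hpr2 : (pt + (1 - pt) * r) * β = pt * (1 - r) := by
    apply mul_right_cancel₀ hD.ne'
    linear_combination (1 - pt) * β * hrD - pt * h1r + pt * β * hDdef
  -- the charged states below the threshold
  have hm1 : ∀ n, n < ΔT → pt * μ1 n = (1 - pt) * β * A + pt * A * (1 - r ^ n) := by
    intro n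
    induction n with
    | zero =>
      intro _
      simp only [pow_zero]
      linear_combination h10 - (1 - pt) * β * hA
    | succ n ih =>
      intro hn
      have ih := ih (by omega)
      rcases n with _ | n
      · have h := hm0 0
        simp only [zero_add, pow_one, pow_zero] at *
        linear_combination h11 + ih + (1 - pt) * β * h + A * hpr2 - pt * β * hA
      · have h := h1m (n + 2) (by omega) hn
        have e : n + 2 - 1 = n + 1 := by omega
        have e2 : n + 1 + 1 = n + 2 := rfl
        have g2 := hm0 (n + 1)
        rw [e2] at g2
        rw [e, hm0 n] at h
        rw [g2] at h
        rw [e2]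
        linear_combination h + ih + A * r ^ (n + 1) * hpr2
  have hsum1 : ∀ N, N ≤ ΔT → pt * (1 - r) * ∑ i ∈ Finset.range N, μ1 i
      = (1 - r) * N * ((1 - pt) * β + pt) * A - pt * A * (1 - r ^ N) := by
    intro N
    induction N with
    | zero => intro _; simp
    | succ N ih =>
      intro hN
      have ih := ih (by omega)
      rw [Finset.sum_range_succ]
      push_cast
      linear_combination ih + (1 - r) * hm1 N (by omega)
  have hP := hsum1 ΔT le_rfl
  set P := ∑ i ∈ Finset.range ΔT, μ1 i
  have hne : (1 - r) ≠ 0 := by linarith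
  rw [← hsplit, hsum0, hSA, ha] at htot
  have hT0 : (0 : ℝ) < ΔT := by exact_mod_cast (by omega : 0 < ΔT)
  have hB : 0 < β * ΔT + pt * r ^ ΔT := by positivity
  have hkey : A * D * (β * ΔT + pt * r ^ ΔT) = pt * β := by
    have h1 : pt * (1 - r) * ((1 - pt) * (1 - β) * A + D * A) + pt * A * r
        + pt * (1 - r) * P = pt * (1 - r) := by
      have : (1 - r) * (1 - r)⁻¹ = 1 := mul_inv_cancel₀ hne
      linear_combination pt * (1 - r) * htot - pt * A * r * this
    rw [hP] at h1
    have h2 : (1 - pt) * (1 - β) + D = 1 := by rw [hDdef]; ring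
    have h3 : (1 - pt) * β + pt = D := by rw [hDdef]; ring
    have h4 : pt * (1 - r) * ((1 - pt) * (1 - β) * A + D * A) = pt * (1 - r) * A := by
      linear_combination pt * (1 - r) * A * h2
    rw [h4, h3] at h1
    linear_combination D * h1 + (pt - ΔT * D * A) * h1r
  rw [ha, eq_div_iff (mul_pos hD hB).ne']
  linear_combination (1 - pt) * (1 - β) * hkey
end
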